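/- arXiv:2307.14546 — 3 statements merged into one kernel-verified Lean document; each statement's English description precedes it below -/
import Mathlib

section
/- For all real numbers p, q, a, b and every natural number m, ∫₀^{2π} exp(p·cos x + q·sin x)·cos(a·cos x + b·sin x − m·x) dx = π·[ (A′ − i·B′)^m · S_m(C′ − i·D′) + (A′ + i·B′)^m · S_m(C′ + i·D′) ], where A′ = (p+b)/2, B′ = (a−q)/2, C′ = (p² + q² − a² − b²)/4, D′ = (a·p + b·q)/2, and S_m(z) = ∑_{k=0}^∞ z^k/(k!·(m+k)!). (In the degenerate case A′ = B′ = 0 and m = 0, the term (A′ ± i·B′)^m is the natural power 0^0 = 1.) -/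
open scoped Real

/-- `S m z = ∑_{k=0}^∞ z^k / (k! (m+k)!)`, i.e. `₀F₁(; m+1; z) / m!`. -/
noncomputable def S (m : ℕ) (z : ℂ) : ℂ :=
  ∑' k : ℕ, z ^ k / ((k.factorial : ℂ) * ((m + k).factorial : ℂ))

/-!
By Euler's formula the integrand is the half-sum of `exp (α cos x + β sin x - i m x)` at
`(α, β) = (p + i a, q + i b)` and `exp (α cos x + β sin x + i m x)` at `(p - i a, q - i b)`;
the reflection `x ↦ 2π - x` turns the second form into the first, with `-β` for `β`.
In terms of `ζ = exp (i x)`, `α cos x + β sin x = u ζ + v ζ⁻¹` with `u = (α - i β) / 2`,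
`v = (α + i β) / 2`, and the integral against `ζ ^ (-m)` extracts from the double series
`∑ u ^ j v ^ k / (j! k!) ζ ^ (j - k)` its terms with `j = m + k`, which add up to `u ^ m S_m(u v)`.
-/

section

open Complex

theorem integral_exp_int_mul_mul_I (n : ℤ) :
    ∫ x : ℝ in (0:ℝ)..(2 * π), exp (n * (x * I)) = if n = 0 then (2 * π : ℂ) else 0 := by
  split_ifs with hn
  · simp [hn]
  · have hnI : (n * I : ℂ) ≠ 0 := by simp [hn]
    calc ∫ x : ℝ in (0:ℝ)..(2 * π), exp (n * (x * I))
        = ∫ x : ℝ in (0:ℝ)..(2 * π), exp (n * I * x) := by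
          simp only [mul_assoc, mul_comm I]
      _ = (exp (n * (2 * π * I)) - 1) / (n * I) := by
        rw [integral_exp_mul_complex hnI]
        simp [mul_assoc, mul_comm I]
      _ = 0 := by rw [exp_int_mul_two_pi_mul_I, sub_self, zero_div]

theorem norm_exp_int_mul_mul_I (n : ℤ) (x : ℝ) : ‖exp (n * (x * I))‖ = 1 := by
  rw [← mul_assoc]
  exact_mod_cast norm_exp_ofReal_mul_I (n * x)

theorem integral_tsum_mul_exp_int_mul_mul_I {ι : Type*} [Countable ι] {c : ι → ℂ}
    (hc : Summable fun i ↦ ‖c i‖) (n : ι → ℤ) :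
    ∫ x : ℝ in (0:ℝ)..(2 * π), ∑' i, c i * exp (n i * (x * I)) =
      ∑' i, c i * if n i = 0 then (2 * π : ℂ) else 0 := by
  let f (i : ι) : C(ℝ, ℂ) := ⟨fun x ↦ c i * exp (n i * (x * I)), by fun_prop⟩
  have norm_f_le (i : ι) (K : TopologicalSpace.Compacts ℝ) : ‖(f i).restrict K‖ ≤ ‖c i‖ :=
    (ContinuousMap.norm_le _ (norm_nonneg _)).2 fun x ↦ by
      rw [ContinuousMap.restrict_apply, ContinuousMap.coe_mk, norm_mul, norm_exp_int_mul_mul_I,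
        mul_one]
  calc ∫ x : ℝ in (0:ℝ)..(2 * π), ∑' i, f i x
      = ∑' i, ∫ x : ℝ in (0:ℝ)..(2 * π), f i x :=
        (intervalIntegral.tsum_intervalIntegral_eq_of_summable_norm <|
          hc.of_nonneg_of_le (fun _ ↦ norm_nonneg _) fun i ↦ norm_f_le i _).symm
    _ = ∑' i, c i * if n i = 0 then (2 * π : ℂ) else 0 := by
        simp only [f, ContinuousMap.coe_mk, intervalIntegral.integral_const_mul,
          integral_exp_int_mul_mul_I]

theorem tsum_ite_fst_eq_add_snd {M : Type*} [AddCommMonoid M] [TopologicalSpace M]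
    (g : ℕ × ℕ → M) (m : ℕ) :
    ∑' jk : ℕ × ℕ, (if jk.1 = m + jk.2 then g jk else 0) = ∑' k, g (m + k, k) := by
  have hinj : Function.Injective fun k : ℕ ↦ (m + k, k) := fun _ _ h ↦ congrArg Prod.snd h
  rw [← hinj.tsum_eq]
  · simp
  · rintro ⟨j, k⟩ hjk
    obtain ⟨rfl, -⟩ : j = m + k ∧ g (j, k) ≠ 0 := by simpa using hjk
    exact ⟨k, rfl⟩

theorem integral_tsum_mul_tsum_mul_exp_neg {a b : ℕ → ℂ} (ha : Summable fun j ↦ ‖a j‖)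
    (hb : Summable fun k ↦ ‖b k‖) (m : ℕ) :
    ∫ x : ℝ in (0:ℝ)..(2 * π),
        (∑' j, a j * exp (x * I) ^ j) * (∑' k, b k * exp (-(x * I)) ^ k) * exp (-(m * (x * I))) =
      2 * π * ∑' k, a (m + k) * b k := by
  have norm_exp (x : ℝ) : ‖exp (x * I)‖ = 1 := norm_exp_ofReal_mul_I x
  have norm_exp_neg (x : ℝ) : ‖exp (-(x * I))‖ = 1 := by rw [exp_neg, norm_inv, norm_exp, inv_one]
  have integrand_eq (x : ℝ) :
      (∑' j, a j * exp (x * I) ^ j) * (∑' k, b k * exp (-(x * I)) ^ k) * exp (-(m * (x * I))) =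
        ∑' jk : ℕ × ℕ, a jk.1 * b jk.2 * exp (((jk.1 - jk.2 - m : ℤ) : ℂ) * (x * I)) := by
    rw [tsum_mul_tsum_of_summable_norm (by simpa [norm_exp] using ha)
      (by simpa [norm_exp_neg] using hb), ← tsum_mul_right]
    refine tsum_congr fun jk ↦ ?_
    have exp_eq : exp (((jk.1 - jk.2 - m : ℤ) : ℂ) * (x * I)) =
        exp (x * I) ^ jk.1 * exp (-(x * I)) ^ jk.2 * exp (-(m * (x * I))) := by
      rw [← exp_nat_mul, ← exp_nat_mul, ← exp_add, ← exp_add]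
      push_cast
      ring_nf
    rw [exp_eq]
    ring
  have index_eq_zero_iff (j k : ℕ) : (j - k - m : ℤ) = 0 ↔ j = m + k := by lia
  simp only [integrand_eq]
  rw [integral_tsum_mul_exp_int_mul_mul_I (ha.mul_norm hb)]
  simp only [index_eq_zero_iff, mul_ite, mul_zero]
  rw [tsum_ite_fst_eq_add_snd (fun jk ↦ a jk.1 * b jk.2 * (2 * π)), tsum_mul_right, mul_comm]

theorem exp_mul_eq_tsum (u z : ℂ) : exp (u * z) = ∑' n : ℕ, u ^ n / n.factorial * z ^ n := by
  rw [exp_eq_exp_ℂ, NormedSpace.exp_eq_tsum_div]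
  simp only [mul_pow, div_mul_eq_mul_div]

theorem pow_mul_S_mul (u v : ℂ) (m : ℕ) :
    u ^ m * S m (u * v) =
      ∑' k : ℕ, u ^ (m + k) / (m + k).factorial * (v ^ k / k.factorial) := by
  rw [S, ← tsum_mul_left]
  refine tsum_congr fun k ↦ ?_
  ring

theorem integral_exp_mul_exp_add_mul_exp_neg (u v : ℂ) (m : ℕ) :
    ∫ x : ℝ in (0:ℝ)..(2 * π),
        exp (u * exp (x * I) + v * exp (-(x * I))) * exp (-(m * (x * I))) =
      2 * π * (u ^ m * S m (u * v)) := by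
  rw [pow_mul_S_mul, ← integral_tsum_mul_tsum_mul_exp_neg
    (NormedSpace.norm_expSeries_div_summable u) (NormedSpace.norm_expSeries_div_summable v)]
  simp only [exp_add, exp_mul_eq_tsum]

theorem integral_exp_cos_add_sin_sub (α β : ℂ) (m : ℕ) :
    ∫ x : ℝ in (0:ℝ)..(2 * π), exp (α * cos x + β * sin x - m * x * I) =
      2 * π * (((α - I * β) / 2) ^ m * S m ((α ^ 2 + β ^ 2) / 4)) := by
  have uv_eq : (α ^ 2 + β ^ 2) / 4 = (α - I * β) / 2 * ((α + I * β) / 2) := by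
    linear_combination β ^ 2 / 4 * I_sq
  rw [uv_eq, ← integral_exp_mul_exp_add_mul_exp_neg]
  refine intervalIntegral.integral_congr fun x _ ↦ ?_
  simp only [← exp_add, ← neg_mul, exp_mul_I, cos_neg, sin_neg]
  congr 1
  linear_combination β * sin x * I_sq

theorem integral_exp_cos_add_sin_add (α β : ℂ) (m : ℕ) :
    ∫ x : ℝ in (0:ℝ)..(2 * π), exp (α * cos x + β * sin x + m * x * I) =
      2 * π * (((α + I * β) / 2) ^ m * S m ((α ^ 2 + β ^ 2) / 4)) := by
  let f (x : ℝ) : ℂ := exp (α * cos x + β * sin x + m * x * I)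
  have f_reflect (x : ℝ) : f (2 * π - x) = exp (α * cos x + -β * sin x - m * x * I) := by
    have exponent_eq : α * cos x + β * -sin x + m * (2 * π - x) * I =
        α * cos x + -β * sin x - m * x * I + m * (2 * π * I) := by ring
    simp only [f, ofReal_sub, ofReal_mul, ofReal_ofNat, cos_two_pi_sub, sin_two_pi_sub]
    rw [exponent_eq, exp_add, exp_nat_mul_two_pi_mul_I, mul_one]
  calc ∫ x : ℝ in (0:ℝ)..(2 * π), f x
      = ∫ x : ℝ in (0:ℝ)..(2 * π), f (2 * π - x) := by simp
    _ = 2 * π * (((α + I * β) / 2) ^ m * S m ((α ^ 2 + β ^ 2) / 4)) := by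
      simp only [f_reflect, integral_exp_cos_add_sin_sub, mul_neg, sub_neg_eq_add, neg_sq]

theorem exp_mul_cos (z w : ℂ) :
    exp z * cos w = 2⁻¹ * (exp (z - w * I) + exp (z + w * I)) := by
  rw [cos, neg_mul, sub_eq_add_neg, exp_add, exp_add]
  ring

theorem gr_3937_2_corrected_general (p q a b : ℂ) (m : ℕ) :
    ∫ x : ℝ in (0:ℝ)..(2 * π),
        exp (p * cos x + q * sin x) * cos (a * cos x + b * sin x - m * x) =
      π *
        (((p + b) / 2 - I * ((a - q) / 2)) ^ m *
            S m ((p ^ 2 + q ^ 2 - a ^ 2 - b ^ 2) / 4 - I * ((a * p + b * q) / 2)) +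
          ((p + b) / 2 + I * ((a - q) / 2)) ^ m *
            S m ((p ^ 2 + q ^ 2 - a ^ 2 - b ^ 2) / 4 + I * ((a * p + b * q) / 2))) := by
  have exp_mul_cos_eq (x : ℝ) :
      exp (p * cos x + q * sin x) * cos (a * cos x + b * sin x - m * x) =
        2⁻¹ * (exp ((p - I * a) * cos x + (q - I * b) * sin x + m * x * I) +
          exp ((p + I * a) * cos x + (q + I * b) * sin x - m * x * I)) := by
    rw [exp_mul_cos]
    ring_nf
  have sub_base_eq : (p - I * a + I * (q - I * b)) / 2 = (p + b) / 2 - I * ((a - q) / 2) := by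
    linear_combination -b / 2 * I_sq
  have add_base_eq : (p + I * a - I * (q + I * b)) / 2 = (p + b) / 2 + I * ((a - q) / 2) := by
    linear_combination -b / 2 * I_sq
  have sub_arg_eq : ((p - I * a) ^ 2 + (q - I * b) ^ 2) / 4 =
      (p ^ 2 + q ^ 2 - a ^ 2 - b ^ 2) / 4 - I * ((a * p + b * q) / 2) := by
    linear_combination (a ^ 2 + b ^ 2) / 4 * I_sq
  have add_arg_eq : ((p + I * a) ^ 2 + (q + I * b) ^ 2) / 4 =
      (p ^ 2 + q ^ 2 - a ^ 2 - b ^ 2) / 4 + I * ((a * p + b * q) / 2) := by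
    linear_combination (a ^ 2 + b ^ 2) / 4 * I_sq
  simp only [exp_mul_cos_eq, intervalIntegral.integral_const_mul]
  rw [intervalIntegral.integral_add (Continuous.intervalIntegrable (by fun_prop) _ _)
    (Continuous.intervalIntegrable (by fun_prop) _ _), integral_exp_cos_add_sin_add,
    integral_exp_cos_add_sin_sub, sub_base_eq, add_base_eq, sub_arg_eq, add_arg_eq]
  ring

end

theorem gr_3937_2_corrected (p q a b : ℝ) (m : ℕ) :
    ((∫ x : ℝ in (0:ℝ)..(2 * π),
        Real.exp (p * Real.cos x + q * Real.sin x) *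
          Real.cos (a * Real.cos x + b * Real.sin x - m * x)) : ℂ) =
      (π : ℂ) *
        ((((p + b) / 2 : ℂ) - Complex.I * ((a - q) / 2 : ℂ)) ^ m *
            S m (((p^2 + q^2 - a^2 - b^2) / 4 : ℂ) - Complex.I * ((a * p + b * q) / 2 : ℂ)) +
          (((p + b) / 2 : ℂ) + Complex.I * ((a - q) / 2 : ℂ)) ^ m *
            S m (((p^2 + q^2 - a^2 - b^2) / 4 : ℂ) + Complex.I * ((a * p + b * q) / 2 : ℂ))) := by
  exact_mod_cast gr_3937_2_corrected_general p q a b m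
end

section
/- For all complex numbers p, q, a, b (with real parts p_R, q_R, a_R, b_R and imaginary parts p_I, q_I, a_I, b_I) and every natural number m, ∫₀^{2π} exp(p·cos x + q·sin x)·cos(a·cos x + b·sin x − m·x) dx = π·[ (A₁ + i·B₁)^m · S_m(C₁ + i·D₁) + (A₂ + i·B₂)^m · S_m(C₂ + i·D₂) ], where A₁ = (p_R + a_I − q_I + b_R)/2, A₂ = (p_R − a_I + q_I + b_R)/2, B₁ = (p_I − a_R + q_R + b_I)/2, B₂ = (p_I + a_R − q_R + b_I)/2, C₁ = ((p_R+a_I)² + (q_R+b_I)² − (p_I−a_R)² − (q_I−b_R)²)/4, C₂ = ((p_R−a_I)² + (q_R−b_I)² − (p_I+a_R)² − (q_I+b_R)²)/4, D₁ = ((p_I−a_R)(p_R+a_I) + (q_I−b_R)(q_R+b_I))/2, and D₂ = ((p_I+a_R)(p_R−a_I) + (q_I+b_R)(q_R−b_I))/2. -/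
open scoped Real

/-!
Write the cosine as a half-sum of exponentials: with `α = p ± i a` and `β = q ± i b`, each half is
an integral of `exp (α cos x + β sin x ∓ i m x)`, and the reflection `x ↦ -x`, `β ↦ -β` exchanges
the two signs of `i m x`. For the negative sign, the integral is `2π` times the `m`-th Fourier
coefficient of `exp (u e^{ix}) exp (v e^{-ix})`, where `u = (α - i β) / 2` and `v = (α + i β) / 2`.
Multiplying the two exponential series and keeping the diagonal `j - k = m` gives `u ^ m S_m(u v)`,
and `u v = (α² + β²) / 4`.
-/

open Complex Set

theorem integral_exp_int_mul_I (n : ℤ) :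
    ∫ x : ℝ in 0..2 * π, exp (n * x * I) = if n = 0 then (2 * π : ℂ) else 0 := by
  split_ifs with hn
  · simp [hn]
  · have hc : (n * I : ℂ) ≠ 0 := mul_ne_zero (Int.cast_ne_zero.mpr hn) I_ne_zero
    have hperiod : exp (n * I * (2 * π : ℝ)) = 1 :=
      exp_eq_one_iff.mpr ⟨n, by push_cast; ring⟩
    simp_rw [mul_right_comm _ _ I]
    rw [integral_exp_mul_complex hc, hperiod]
    simp

theorem integral_tsum_exp_smul {ι E : Type*} [Countable ι] [NormedAddCommGroup E]
    [NormedSpace ℂ E] [CompleteSpace E] (n : ι → ℤ) {c : ι → E} (hc : Summable fun i ↦ ‖c i‖) :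
    ∫ x : ℝ in 0..2 * π, ∑' i, exp (n i * x * I) • c i =
      (2 * π : ℂ) • ∑' i : {i | n i = 0}, c i := by
  have hnorm (i : ι) (x : ℝ) : ‖exp (n i * x * I) • c i‖ = ‖c i‖ := by
    rw [norm_smul, ← ofReal_intCast, ← ofReal_mul, norm_exp_ofReal_mul_I, one_mul]
  have hsum : HasSum (fun i ↦ ∫ x : ℝ in 0..2 * π, exp (n i * x * I) • c i)
      (∫ x : ℝ in 0..2 * π, ∑' i, exp (n i * x * I) • c i) := by
    refine intervalIntegral.hasSum_integral_of_dominated_convergence (fun i _ ↦ ‖c i‖)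
      (fun i ↦ Continuous.aestronglyMeasurable (by fun_prop))
      (fun i ↦ .of_forall fun x _ ↦ (hnorm i x).le) (.of_forall fun _ _ ↦ hc)
      intervalIntegrable_const (.of_forall fun x _ ↦ Summable.hasSum (.of_norm ?_))
    simpa only [hnorm] using hc
  rw [← hsum.tsum_eq, tsum_subtype, ← tsum_const_smul'']
  refine tsum_congr fun i ↦ ?_
  rw [intervalIntegral.integral_smul_const, integral_exp_int_mul_I, indicator_apply]
  simp only [mem_ofPred_eq, ite_smul, zero_smul, smul_ite, smul_zero]

theorem integral_exp_smul_tsum_mul_tsum {A : Type*} [NormedRing A] [NormedAlgebra ℂ A]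
    [CompleteSpace A] {c d : ℕ → A} (hc : Summable fun j ↦ ‖c j‖) (hd : Summable fun k ↦ ‖d k‖)
    (m : ℕ) :
    ∫ x : ℝ in 0..2 * π, exp (-(m * x * I)) •
        ((∑' j : ℕ, exp (j * (x * I)) • c j) * ∑' k : ℕ, exp (k * -(x * I)) • d k) =
      (2 * π : ℂ) • ∑' k, c (m + k) * d k := by
  have hnorm {e : ℕ → A} (he : Summable fun k ↦ ‖e k‖) (x : ℝ) :
      Summable fun k : ℕ ↦ ‖exp (k * (x * I)) • e k‖ := by
    refine he.congr fun k ↦ ?_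
    rw [norm_smul, ← mul_assoc, ← ofReal_natCast, ← ofReal_mul, norm_exp_ofReal_mul_I, one_mul]
  have hdouble (x : ℝ) : exp (-(m * x * I)) •
        ((∑' j : ℕ, exp (j * (x * I)) • c j) * ∑' k : ℕ, exp (k * -(x * I)) • d k) =
      ∑' z : ℕ × ℕ, exp (((z.1 - z.2 - m : ℤ) : ℂ) * x * I) • (c z.1 * d z.2) := by
    have hd' : Summable fun k : ℕ ↦ ‖exp (k * -(x * I)) • d k‖ := by
      simpa only [ofReal_neg, neg_mul] using hnorm hd (-x)
    rw [tsum_mul_tsum_of_summable_norm (hnorm hc x) hd', ← tsum_const_smul'']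
    refine tsum_congr fun z ↦ ?_
    rw [smul_mul_smul_comm, smul_smul, ← exp_add, ← exp_add]
    congr 2
    push_cast
    ring
  have hdiag : {z : ℕ × ℕ | (z.1 - z.2 - m : ℤ) = 0} = range fun k ↦ (m + k, k) := by
    ext ⟨j, k⟩
    simp only [mem_ofPred_eq, mem_range, Prod.mk.injEq, exists_eq_right]
    lia
  have hinj : Function.Injective fun k : ℕ ↦ (m + k, k) := fun _ _ h ↦ (Prod.ext_iff.mp h).2
  simp_rw [hdouble]
  rw [integral_tsum_exp_smul _ (hc.mul_norm hd), hdiag,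
    tsum_range (fun z : ℕ × ℕ ↦ c z.1 * d z.2) hinj]

theorem intervalIntegral_comp_neg_of_periodic {E : Type*} [NormedAddCommGroup E] [NormedSpace ℝ E]
    {f : ℝ → E} {T : ℝ} (hf : Function.Periodic f T) :
    ∫ x in 0..T, f (-x) = ∫ x in 0..T, f x := by
  simpa using hf.intervalIntegral_add_eq (-T) 0

theorem exp_mul_exp_eq_tsum (u y : ℂ) :
    exp (u * exp y) = ∑' k : ℕ, exp (k * y) • (u ^ k / k.factorial) := by
  rw [exp_eq_exp_ℂ, ← (NormedSpace.expSeries_div_hasSum_exp _).tsum_eq, ← exp_eq_exp_ℂ]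
  refine tsum_congr fun k ↦ ?_
  rw [mul_pow, ← exp_nat_mul, smul_eq_mul]
  ring

theorem integral_exp_exp_mul_I_sub (u v : ℂ) (m : ℕ) :
    ∫ x : ℝ in 0..2 * π, exp (u * exp (x * I) + v * exp (-(x * I)) - m * x * I) =
      2 * π * (u ^ m * S m (u * v)) := by
  calc
    _ = ∫ x : ℝ in 0..2 * π, exp (-(m * x * I)) •
          ((∑' j : ℕ, exp (j * (x * I)) • (u ^ j / j.factorial)) *
            ∑' k : ℕ, exp (k * -(x * I)) • (v ^ k / k.factorial)) := by
      refine intervalIntegral.integral_congr fun x _ ↦ ?_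
      rw [← exp_mul_exp_eq_tsum, ← exp_mul_exp_eq_tsum, smul_eq_mul, ← exp_add, ← exp_add,
        neg_add_eq_sub]
    _ = 2 * π * ∑' k : ℕ, u ^ (m + k) / (m + k).factorial * (v ^ k / k.factorial) :=
      integral_exp_smul_tsum_mul_tsum (NormedSpace.norm_expSeries_div_summable u)
        (NormedSpace.norm_expSeries_div_summable v) m
    _ = 2 * π * (u ^ m * S m (u * v)) := by
      rw [S, ← tsum_mul_left (a := u ^ m)]
      congr 1
      refine tsum_congr fun k ↦ ?_
      rw [pow_add, mul_pow]
      ring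

theorem integral_exp_cos_sin_sub (α β : ℂ) (m : ℕ) :
    ∫ x : ℝ in 0..2 * π, exp (α * cos x + β * sin x - m * x * I) =
      2 * π * (((α - I * β) / 2) ^ m * S m ((α ^ 2 + β ^ 2) / 4)) := by
  have hprod : (α ^ 2 + β ^ 2) / 4 = (α - I * β) / 2 * ((α + I * β) / 2) := by
    linear_combination (β ^ 2 / 4) * I_sq
  rw [hprod, ← integral_exp_exp_mul_I_sub]
  refine intervalIntegral.integral_congr fun x _ ↦ congrArg exp ?_
  rw [cos, sin, neg_mul]
  ring

theorem integral_exp_cos_sin_add (α β : ℂ) (m : ℕ) :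
    ∫ x : ℝ in 0..2 * π, exp (α * cos x + β * sin x + m * x * I) =
      2 * π * (((α + I * β) / 2) ^ m * S m ((α ^ 2 + β ^ 2) / 4)) := by
  have hperiodic : Function.Periodic
      (fun x : ℝ ↦ exp (α * cos x + -β * sin x - m * x * I)) (2 * π) := fun x ↦ by
    push_cast
    rw [cos_add_two_pi, sin_add_two_pi]
    refine (congrArg exp ?_).trans (exp_periodic.sub_nat_mul_eq m)
    ring
  calc
    _ = ∫ x : ℝ in 0..2 * π, exp (α * cos ↑(-x) + -β * sin ↑(-x) - m * ↑(-x) * I) := by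
      simp only [ofReal_neg, cos_neg, sin_neg, mul_neg, neg_mul, neg_neg, sub_neg_eq_add]
    _ = ∫ x : ℝ in 0..2 * π, exp (α * cos x + -β * sin x - m * x * I) :=
      intervalIntegral_comp_neg_of_periodic hperiodic
    _ = _ := by
      rw [integral_exp_cos_sin_sub, neg_sq, mul_neg, sub_neg_eq_add]

theorem integral_exp_mul_cos_sub (p q a b : ℂ) (m : ℕ) :
    ∫ x : ℝ in 0..2 * π, exp (p * cos x + q * sin x) * cos (a * cos x + b * sin x - m * x) =
      π * (((p - I * a + I * (q - I * b)) / 2) ^ m *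
            S m (((p - I * a) ^ 2 + (q - I * b) ^ 2) / 4) +
          ((p + I * a - I * (q + I * b)) / 2) ^ m *
            S m (((p + I * a) ^ 2 + (q + I * b) ^ 2) / 4)) := by
  have hsplit (x : ℝ) :
      exp (p * cos x + q * sin x) * cos (a * cos x + b * sin x - m * x) =
        (exp ((p - I * a) * cos x + (q - I * b) * sin x + m * x * I) +
          exp ((p + I * a) * cos x + (q + I * b) * sin x - m * x * I)) / 2 := by
    rw [cos.eq_1 (_ - _), mul_div_assoc', mul_add, ← exp_add, ← exp_add, add_comm (exp _)]
    ring_nf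
  simp_rw [hsplit]
  rw [intervalIntegral.integral_div, intervalIntegral.integral_add
      (Continuous.intervalIntegrable (by fun_prop) _ _)
      (Continuous.intervalIntegrable (by fun_prop) _ _),
    integral_exp_cos_sin_add, integral_exp_cos_sin_sub]
  ring

theorem sub_I_mul_eq_re_im (z w : ℂ) :
    z - I * w = (z.re + w.im : ℂ) + I * (z.im - w.re) := by
  apply Complex.ext <;> simp

theorem add_I_mul_eq_re_im (z w : ℂ) :
    z + I * w = (z.re - w.im : ℂ) + I * (z.im + w.re) := by
  apply Complex.ext <;> simp [sub_eq_add_neg]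

theorem add_I_mul_sq_add_add_I_mul_sq (x y s t : ℂ) :
    (x + I * y) ^ 2 + (s + I * t) ^ 2 =
      x ^ 2 + s ^ 2 - y ^ 2 - t ^ 2 + 2 * I * (y * x + t * s) := by
  linear_combination (y ^ 2 + t ^ 2) * I_sq

theorem gr_3937_2_complex_params (p q a b : ℂ) (m : ℕ) :
    (∫ x : ℝ in (0:ℝ)..(2 * π),
        Complex.exp (p * Complex.cos x + q * Complex.sin x) *
          Complex.cos (a * Complex.cos x + b * Complex.sin x - m * x)) =
      (π : ℂ) *
        ((((p.re + a.im - q.im + b.re) / 2 : ℂ) +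
              Complex.I * ((p.im - a.re + q.re + b.im) / 2 : ℂ)) ^ m *
            S m ((((p.re + a.im)^2 + (q.re + b.im)^2 - (p.im - a.re)^2 - (q.im - b.re)^2) / 4 : ℂ) +
              Complex.I * (((p.im - a.re) * (p.re + a.im) + (q.im - b.re) * (q.re + b.im)) / 2 : ℂ)) +
          (((p.re - a.im + q.im + b.re) / 2 : ℂ) +
              Complex.I * ((p.im + a.re - q.re + b.im) / 2 : ℂ)) ^ m *
            S m ((((p.re - a.im)^2 + (q.re - b.im)^2 - (p.im + a.re)^2 - (q.im + b.re)^2) / 4 : ℂ) +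
              Complex.I * (((p.im + a.re) * (p.re - a.im) + (q.im + b.re) * (q.re - b.im)) / 2 : ℂ))) := by
  rw [integral_exp_mul_cos_sub, sub_I_mul_eq_re_im p a, sub_I_mul_eq_re_im q b,
    add_I_mul_eq_re_im p a, add_I_mul_eq_re_im q b, add_I_mul_sq_add_add_I_mul_sq,
    add_I_mul_sq_add_add_I_mul_sq]
  congr 4
  · linear_combination ((q.im - b.re) / 2 : ℂ) * I_sq
  · ring
  · linear_combination (-(q.im + b.re) / 2 : ℂ) * I_sq
  · ring
end

section
/- Let p, q, a, b be real numbers and set X = ((p+b) + i·(a−q))/2 and Y = ((p−b) + i·(a+q))/2, and suppose Y ≠ 0. Then arg X + arg Y does not lie in (−π, π] if and only if one of the following holds: (1) [ |a| > |q|, or (a = |q| and a ≠ 0) ] and p < −b·q/a; (2) a < −|q| and p = −b·q/a; (3) a = 0 and q = 0 and p < −|b|. -/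
open scoped Real

/-!
The imaginary part of `z * w` has the sign of `sin (arg z + arg w)`. The sum `arg z + arg w` exceeds
`π` only if both points lie in the closed upper half plane, and is at most `-π` only if both lie
in the open lower one; within each of these ranges the sign of the sine decides, except that it
cannot see the value `2π`, reached when both points are negative reals. For `X` and `Y` the half
plane conditions read `|q| ≤ a` and `a < -|q|`, and `2 * (X * Y).im = p * a + b * q`.
-/

section ArgSum

open Complex

variable {z w : ℂ}

lemma im_mul_eq_norm_mul_sin_arg_add_arg (z w : ℂ) :
    (z * w).im = ‖z * w‖ * Real.sin (arg z + arg w) := by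
  rw [norm_mul, Real.sin_add, mul_im]
  linear_combination
    -w.im * norm_mul_cos_arg z - ‖z‖ * Real.cos (arg z) * norm_mul_sin_arg w
      - w.re * norm_mul_sin_arg z - ‖z‖ * Real.sin (arg z) * norm_mul_cos_arg w

lemma im_mul_neg_of_pi_lt_arg_add_arg (hgt : π < arg z + arg w) (hlt : arg z + arg w < 2 * π) :
    (z * w).im < 0 := by
  have hz : z ≠ 0 := by
    rintro rfl
    linarith [arg_zero, arg_le_pi w]
  have hw : w ≠ 0 := by
    rintro rfl
    linarith [arg_zero, arg_le_pi z]
  have hsin : Real.sin (arg z + arg w) < 0 := by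
    rw [← Real.sin_sub_two_pi]
    exact Real.sin_neg_of_neg_of_neg_pi_lt (by linarith) (by linarith)
  rw [im_mul_eq_norm_mul_sin_arg_add_arg]
  exact mul_neg_of_pos_of_neg (norm_pos_iff.2 (mul_ne_zero hz hw)) hsin

lemma pi_lt_arg_add_arg_iff :
    π < arg z + arg w ↔
      ((0 ≤ z.im ∧ 0 ≤ w.im) ∧ (z * w).im < 0) ∨ (arg z = π ∧ arg w = π) := by
  have hz := arg_le_pi z
  have hw := arg_le_pi w
  constructor
  · intro hgt
    rcases (by linarith : arg z + arg w ≤ 2 * π).lt_or_eq with hlt | heq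
    · exact .inl ⟨⟨arg_nonneg_iff.1 (by linarith), arg_nonneg_iff.1 (by linarith)⟩,
        im_mul_neg_of_pi_lt_arg_add_arg hgt hlt⟩
    · exact .inr ⟨by linarith, by linarith⟩
  · rintro (⟨⟨hz_im, hw_im⟩, hneg⟩ | ⟨hz_pi, hw_pi⟩)
    · contrapose! hneg
      rw [im_mul_eq_norm_mul_sin_arg_add_arg]
      have hnonneg := add_nonneg (arg_nonneg_iff.2 hz_im) (arg_nonneg_iff.2 hw_im)
      exact mul_nonneg (norm_nonneg _) (Real.sin_nonneg_of_nonneg_of_le_pi hnonneg hneg)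
    · linarith [Real.pi_pos]

lemma arg_add_arg_le_neg_pi_iff :
    arg z + arg w ≤ -π ↔ (z.im < 0 ∧ w.im < 0) ∧ 0 ≤ (z * w).im := by
  rw [im_mul_eq_norm_mul_sin_arg_add_arg]
  constructor
  · intro hle
    have hz := neg_pi_lt_arg z
    have hw := neg_pi_lt_arg w
    have hsin : 0 ≤ Real.sin (arg z + arg w) := by
      rw [← Real.sin_add_two_pi]
      exact Real.sin_nonneg_of_nonneg_of_le_pi (by linarith) (by linarith)
    exact ⟨⟨arg_neg_iff.1 (by linarith), arg_neg_iff.1 (by linarith)⟩,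
      mul_nonneg (norm_nonneg _) hsin⟩
  · rintro ⟨⟨hz_im, hw_im⟩, hnonneg⟩
    contrapose! hnonneg
    have hz : z ≠ 0 := by
      rintro rfl
      exact hz_im.ne zero_im
    have hw : w ≠ 0 := by
      rintro rfl
      exact hw_im.ne zero_im
    have hneg := add_neg (arg_neg_iff.2 hz_im) (arg_neg_iff.2 hw_im)
    exact mul_neg_of_pos_of_neg (norm_pos_iff.2 (mul_ne_zero hz hw))
      (Real.sin_neg_of_neg_of_neg_pi_lt hneg hnonneg)

lemma arg_add_arg_notMem_Ioc_iff :
    arg z + arg w ∉ Set.Ioc (-π) π ↔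
      ((0 ≤ z.im ∧ 0 ≤ w.im) ∧ (z * w).im < 0) ∨ ((z.im < 0 ∧ w.im < 0) ∧ 0 ≤ (z * w).im) ∨
        ((z.re < 0 ∧ z.im = 0) ∧ (w.re < 0 ∧ w.im = 0)) := by
  rw [Set.mem_Ioc, not_and_or, not_lt, not_le, arg_add_arg_le_neg_pi_iff, pi_lt_arg_add_arg_iff,
    arg_eq_pi_iff, arg_eq_pi_iff]
  exact or_left_comm

end ArgSum

lemma arg_add_arg_notMem_Ioc_iff_mul_add_mul (p q a b : ℝ) :
    (((p : ℂ) + b + Complex.I * (a - q)) / 2).arg +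
        (((p : ℂ) - b + Complex.I * (a + q)) / 2).arg ∉ Set.Ioc (-π) π ↔
      (|q| ≤ a ∧ p * a + b * q < 0) ∨ (a < -|q| ∧ 0 ≤ p * a + b * q) ∨
        (a = 0 ∧ q = 0 ∧ p < -|b|) := by
  have hX : ((p : ℂ) + b + Complex.I * (a - q)) / 2 = ⟨(p + b) / 2, (a - q) / 2⟩ := by
    apply Complex.ext <;> simp
  have hY : ((p : ℂ) - b + Complex.I * (a + q)) / 2 = ⟨(p - b) / 2, (a + q) / 2⟩ := by
    apply Complex.ext <;> simp
  have him : (p + b) / 2 * ((a + q) / 2) + (a - q) / 2 * ((p - b) / 2) = (p * a + b * q) / 2 := by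
    ring
  have hneg : (p * a + b * q) / 2 < 0 ↔ p * a + b * q < 0 := by
    rw [div_lt_iff₀ two_pos, zero_mul]
  have hnonneg : 0 ≤ (p * a + b * q) / 2 ↔ 0 ≤ p * a + b * q := by
    rw [le_div_iff₀ two_pos, zero_mul]
  have hupper : |q| ≤ a ↔ 0 ≤ (a - q) / 2 ∧ 0 ≤ (a + q) / 2 := by
    rw [abs_le]
    constructor <;> rintro ⟨_, _⟩ <;> constructor <;> linarith
  have hlower : a < -|q| ↔ (a - q) / 2 < 0 ∧ (a + q) / 2 < 0 := by
    rw [lt_neg, abs_lt]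
    constructor <;> rintro ⟨_, _⟩ <;> constructor <;> linarith
  have hnegative : (a = 0 ∧ q = 0 ∧ p < -|b|) ↔
      ((p + b) / 2 < 0 ∧ (a - q) / 2 = 0) ∧ ((p - b) / 2 < 0 ∧ (a + q) / 2 = 0) := by
    rw [lt_neg, abs_lt]
    constructor
    · rintro ⟨ha, hq, hlt, hgt⟩
      exact ⟨⟨by linarith, by linarith⟩, by linarith, by linarith⟩
    · rintro ⟨⟨hX_re, hX_im⟩, hY_re, hY_im⟩
      exact ⟨by linarith, by linarith, by linarith, by linarith⟩
  rw [hX, hY, arg_add_arg_notMem_Ioc_iff, Complex.mul_im, him, hneg, hnonneg, hupper, hlower,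
    hnegative]

lemma abs_lt_abs_or_eq_abs_and_ne_zero_iff {G : Type*} [AddCommGroup G] [LinearOrder G]
    [IsOrderedAddMonoid G] {a q : G} :
    (|q| < |a| ∨ (a = |q| ∧ a ≠ 0)) ↔ (0 < a ∧ |q| ≤ a) ∨ a < -|q| := by
  have hpos : (0 < a ∧ |q| ≤ a) ↔ |q| < a ∨ (a = |q| ∧ a ≠ 0) := by
    constructor
    · rintro ⟨ha, hqa⟩
      exact hqa.lt_or_eq.imp_right fun heq => ⟨heq.symm, ha.ne'⟩
    · rintro (hlt | ⟨heq, ha⟩)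
      · exact ⟨(abs_nonneg q).trans_lt hlt, hlt.le⟩
      · exact ⟨((abs_nonneg q).trans_eq heq.symm).lt_of_ne' ha, heq.ge⟩
  rw [hpos, lt_abs, lt_neg (a := a), or_right_comm]

section LinearOrderedField

variable {K : Type*} [Field K] [LinearOrder K] [IsStrictOrderedRing K] {p q a b : K}

lemma abs_le_and_mul_add_mul_neg_iff :
    (|q| ≤ a ∧ p * a + b * q < 0) ↔ (0 < a ∧ |q| ≤ a) ∧ p < -(b * q / a) := by
  have hdiv (ha : 0 < a) : p * a + b * q < 0 ↔ p < -(b * q / a) := by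
    rw [← neg_div, lt_div_iff₀ ha, lt_neg_iff_add_neg]
  constructor
  · rintro ⟨hqa, hneg⟩
    have ha : 0 < a := by
      refine ((abs_nonneg q).trans hqa).lt_of_ne ?_
      rintro rfl
      simp [abs_nonpos_iff.1 hqa] at hneg
    exact ⟨⟨ha, hqa⟩, (hdiv ha).1 hneg⟩
  · rintro ⟨⟨ha, hqa⟩, hp⟩
    exact ⟨hqa, (hdiv ha).2 hp⟩

lemma lt_neg_abs_and_mul_add_mul_nonneg_iff :
    (a < -|q| ∧ 0 ≤ p * a + b * q) ↔ a < -|q| ∧ p ≤ -(b * q / a) := by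
  refine and_congr_right fun hqa => ?_
  have ha : a < 0 := hqa.trans_le (neg_nonpos.2 (abs_nonneg q))
  rw [← neg_div, le_div_iff_of_neg ha, neg_le_iff_add_nonneg]

end LinearOrderedField

theorem case2_sign_flip_conditions (p q a b : ℝ)
    (hY : (((p : ℂ) - b + Complex.I * (a + q)) / 2) ≠ 0) :
    ((((p : ℂ) + b + Complex.I * (a - q)) / 2).arg +
        ((((p : ℂ) - b + Complex.I * (a + q)) / 2)).arg ∉ Set.Ioc (-π) π) ↔
      (((|a| > |q| ∨ (a = |q| ∧ a ≠ 0)) ∧ p < -(b * q / a)) ∨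
        (a < -|q| ∧ p = -(b * q / a)) ∨
        (a = 0 ∧ q = 0 ∧ p < -|b|)) := by
  rw [arg_add_arg_notMem_Ioc_iff_mul_add_mul, abs_le_and_mul_add_mul_neg_iff,
    lt_neg_abs_and_mul_add_mul_nonneg_iff, le_iff_lt_or_eq (a := p), gt_iff_lt,
    abs_lt_abs_or_eq_abs_and_ne_zero_iff]
  tauto
end
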